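/- If L is symmetric (L y y' = L y' y for all y, y'), then for every q ∈ Δ the Max-Margin Bayes risk admits the dual linear-programming expression H_M(q) = min { ∑_{y} a y · q y : a : Y → ℝ, (a y + a y') / 2 ≥ L y y' for all y, y' ∈ Y }, and this minimum is attained. -/

import Mathlib

open Finset Set

variable {Y : Type*} [Fintype Y] [DecidableEq Y] [Nonempty Y]

/-- Probability simplex over `Y`. -/
def simplexSet (Y : Type*) [Fintype Y] : Set (Y → ℝ) :=
  {q | (∀ y, 0 ≤ q y) ∧ ∑ y, q y = 1}

/-- Bayes risk of the discrete loss `L`. -/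
noncomputable def HL (L : Y → Y → ℝ) (q : Y → ℝ) : ℝ :=
  ⨅ y : Y, ∑ y', L y y' * q y'

/-- Optimal-label set. -/
noncomputable def ystar (L : Y → Y → ℝ) (q : Y → ℝ) : Set Y :=
  {y | ∑ y', L y y' * q y' = HL L q}

/-- Prediction set of label `y`. -/
noncomputable def predSet (L : Y → Y → ℝ) (y : Y) : Set (Y → ℝ) :=
  {q ∈ simplexSet Y | y ∈ ystar L q}

/-- Max-Margin loss. -/
noncomputable def SM (L : Y → Y → ℝ) (v : Y → ℝ) (y : Y) : ℝ :=
  ⨆ y' : Y, (L y y' + v y' - v y)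

/-- Bayes risk of the Max-Margin loss. -/
noncomputable def HM (L : Y → Y → ℝ) (q : Y → ℝ) : ℝ :=
  ⨅ v : Y → ℝ, ∑ y, q y * SM L v y

/-- Conditional-risk minimizers of the Max-Margin loss. -/
noncomputable def vstarM (L : Y → Y → ℝ) (q : Y → ℝ) : Set (Y → ℝ) :=
  {v | ∑ y, q y * SM L v y = HM L q}

/-- Restricted-Max-Margin loss. -/
noncomputable def SRM (L : Y → Y → ℝ) (v : Y → ℝ) (y : Y) : ℝ :=
  sSup ((fun q => ∑ y', L y y' * q y' + ∑ z, v z * q z) '' predSet L y) - v y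

/-- Bayes risk of the Restricted-Max-Margin loss. -/
noncomputable def HRM (L : Y → Y → ℝ) (q : Y → ℝ) : ℝ :=
  ⨅ v : Y → ℝ, ∑ y, q y * SRM L v y

/-- Conditional-risk minimizers of the Restricted-Max-Margin loss. -/
noncomputable def vstarRM (L : Y → Y → ℝ) (q : Y → ℝ) : Set (Y → ℝ) :=
  {v | ∑ y, q y * SRM L v y = HRM L q}

/-- Max-Min-Margin loss. -/
noncomputable def SMM (L : Y → Y → ℝ) (v : Y → ℝ) (y : Y) : ℝ :=
  sSup ((fun q => (⨅ z : Y, ∑ y', L z y' * q y') + ∑ z, v z * q z) '' simplexSet Y) - v y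

/-- Bayes risk of the Max-Min-Margin loss. -/
noncomputable def HMM (L : Y → Y → ℝ) (q : Y → ℝ) : ℝ :=
  ⨅ v : Y → ℝ, ∑ y, q y * SMM L v y

/-- Transportation polytope `U(q, q)`. -/
def Upoly (q : Y → ℝ) : Set (Y → Y → ℝ) :=
  {Q | (∀ y y', 0 ≤ Q y y') ∧ (∀ y, ∑ y', Q y y' = q y) ∧ (∀ y', ∑ y, Q y y' = q y')}

/-- The constraint set `C_L`. -/
def CL (L : Y → Y → ℝ) : Set (Y → Y → ℝ) :=
  {Q | ∀ y z : Y, ∑ y', L y y' * Q y y' ≤ ∑ y', L z y' * Q y y'}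

/-!
Adding the margin inequalities for `(y, y')` and `(y', y)` cancels the scores, so for symmetric `L`
every loss vector `SM L v` is dual feasible. Conversely, the scores `-a / 2` of a dual feasible `a`
have loss vector at most `a`. Hence minimizing a monotone function over loss vectors or over dual
feasible vectors gives the same value. The minimum is attained because dual feasible vectors are
bounded below by the diagonal of `L`, and truncating them at a large constant keeps them feasible,
which reduces the minimization to a compact box.
-/

/-- The feasible set of the linear program dual to the Max-Margin Bayes risk, whose objective at a
distribution `q` is `∑ y, a y * q y`. -/
def dualFeasible {Y : Type*} (L : Y → Y → ℝ) : Set (Y → ℝ) :=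
  {a | ∀ y y' : Y, L y y' ≤ (a y + a y') / 2}

section

variable {Y : Type*} {L : Y → Y → ℝ}

theorem diag_le_of_mem_dualFeasible {a : Y → ℝ} (ha : a ∈ dualFeasible L) (y : Y) :
    L y y ≤ a y := by
  linarith [ha y y]

theorem isClosed_dualFeasible (L : Y → Y → ℝ) : IsClosed (dualFeasible L) := by
  simp only [dualFeasible, Set.ofPred_forall]
  exact isClosed_iInter fun y => isClosed_iInter fun y' =>
    isClosed_le continuous_const (by fun_prop)

theorem inf_const_mem_dualFeasible {m M : ℝ} (hm : ∀ y, m ≤ L y y) (hM : ∀ y y', L y y' ≤ M)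
    {a : Y → ℝ} (ha : a ∈ dualFeasible L) :
    a ⊓ Function.const Y (2 * M - m) ∈ dualFeasible L := by
  intro y y'
  have hmM : m ≤ M := (hm y).trans (hM y y)
  have hy : m ≤ a y := (hm y).trans (diag_le_of_mem_dualFeasible ha y)
  have hy' : m ≤ a y' := (hm y').trans (diag_le_of_mem_dualFeasible ha y')
  simp only [Pi.inf_apply, Function.const_apply]
  rcases min_choice (a y) (2 * M - m) with h | h <;>
    rcases min_choice (a y') (2 * M - m) with h' | h' <;>
    rw [h, h'] <;> linarith [ha y y', hM y y']

theorem exists_isMinOn_dualFeasible [Finite Y] {α : Type*} [LinearOrder α] [TopologicalSpace α]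
    [ClosedIicTopology α] (L : Y → Y → ℝ) {f : (Y → ℝ) → α} (hmono : Monotone f)
    (hcont : Continuous f) :
    ∃ a ∈ dualFeasible L, IsMinOn f (dualFeasible L) a := by
  obtain ⟨m, hm⟩ := (Set.finite_range fun y => L y y).bddBelow
  obtain ⟨M, hM⟩ := (Set.finite_range (Function.uncurry L)).bddAbove
  replace hm : ∀ y, m ≤ L y y := fun y => hm ⟨y, rfl⟩
  replace hM : ∀ y y', L y y' ≤ M := fun y y' => hM ⟨(y, y'), rfl⟩
  let box : Set (Y → ℝ) := Set.Icc (Function.const Y m) (Function.const Y (2 * M - m))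
  have hcompact : IsCompact (dualFeasible L ∩ box) :=
    isCompact_Icc.inter_left (isClosed_dualFeasible L)
  have htrunc : ∀ a ∈ dualFeasible L,
      a ⊓ Function.const Y (2 * M - m) ∈ dualFeasible L ∩ box := fun a ha =>
    ⟨inf_const_mem_dualFeasible hm hM ha,
      le_inf (fun y => (hm y).trans (diag_le_of_mem_dualFeasible ha y))
        (fun y => show m ≤ 2 * M - m by linarith [hm y, hM y y]), inf_le_right⟩
  have hconst : Function.const Y M ∈ dualFeasible L := fun y y' => by
    simpa only [Function.const_apply, add_self_div_two] using hM y y'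
  obtain ⟨a, ha, hmin⟩ := hcompact.exists_isMinOn ⟨_, htrunc _ hconst⟩ hcont.continuousOn
  exact ⟨a, ha.1, fun b hb => (hmin (htrunc b hb)).trans (hmono inf_le_left)⟩

theorem le_SM [Finite Y] (L : Y → Y → ℝ) (v : Y → ℝ) (y y' : Y) :
    L y y' + v y' - v y ≤ SM L v y :=
  le_ciSup (f := fun y' => L y y' + v y' - v y) (Set.finite_range _).bddAbove y'

theorem SM_mem_dualFeasible [Finite Y] (hsymm : ∀ y y', L y y' = L y' y) (v : Y → ℝ) :
    SM L v ∈ dualFeasible L := fun y y' => by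
  linarith [le_SM L v y y', le_SM L v y' y, hsymm y y']

theorem SM_neg_half_le {a : Y → ℝ} (ha : a ∈ dualFeasible L) :
    SM L (fun y => -a y / 2) ≤ a := fun y =>
  have : Nonempty Y := ⟨y⟩
  ciSup_le fun y' => by linarith [ha y y']

theorem isLeast_image_dualFeasible_iInf_SM [Finite Y] {α : Type*}
    [ConditionallyCompleteLinearOrder α] [TopologicalSpace α] [ClosedIicTopology α]
    (hsymm : ∀ y y', L y y' = L y' y) {f : (Y → ℝ) → α} (hmono : Monotone f)
    (hcont : Continuous f) :
    IsLeast (f '' dualFeasible L) (⨅ v, f (SM L v)) := by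
  obtain ⟨a, ha, hmin⟩ := exists_isMinOn_dualFeasible L hmono hcont
  have hle : ∀ v, f a ≤ f (SM L v) := fun v => hmin (SM_mem_dualFeasible hsymm v)
  have heq : ⨅ v, f (SM L v) = f a :=
    le_antisymm (ciInf_le_of_le ⟨f a, Set.forall_mem_range.2 hle⟩ _ (hmono (SM_neg_half_le ha)))
      (le_ciInf hle)
  rw [heq]
  exact ⟨Set.mem_image_of_mem f ha, Set.forall_mem_image.2 hmin⟩

end

theorem stmt16_general {Y : Type*} [Fintype Y] {L : Y → Y → ℝ}
    (hsymm : ∀ y y', L y y' = L y' y) {q : Y → ℝ} (hq : ∀ y, 0 ≤ q y) :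
    IsLeast {r : ℝ | ∃ a : Y → ℝ,
      (∀ y y' : Y, L y y' ≤ (a y + a y') / 2) ∧ r = ∑ y, a y * q y} (HM L q) := by
  have hmono : Monotone fun a : Y → ℝ => ∑ y, a y * q y := fun a b hab =>
    Finset.sum_le_sum fun y _ => mul_le_mul_of_nonneg_right (hab y) (hq y)
  have hleast := isLeast_image_dualFeasible_iInf_SM hsymm hmono (by fun_prop)
  simpa only [HM, mul_comm (q _), Set.image, dualFeasible, Set.mem_ofPred_eq, eq_comm] using hleast

theorem stmt16 (Y : Type*) [Fintype Y] [DecidableEq Y] [Nonempty Y] (L : Y → Y → ℝ)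
    (hcard : 2 ≤ Fintype.card Y)
    (hnonneg : ∀ y y', 0 ≤ L y y')
    (hzero : ∀ y y', L y y' = 0 ↔ y = y')
    (hsymm : ∀ y y', L y y' = L y' y) :
    ∀ q ∈ simplexSet Y,
      IsLeast {r : ℝ | ∃ a : Y → ℝ,
        (∀ y y' : Y, L y y' ≤ (a y + a y') / 2) ∧ r = ∑ y, a y * q y} (HM L q) :=
  fun _ hq => stmt16_general hsymm hq.1
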